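/- In the single-point (d=0) case with μ_D = δ_μ (a point mass at μ > 0) and noise parameter t = B''(0) > 0, the supremum over u ∈ ℝ of ∫log|λ−u| d(ρ_{sc,t} ⊞ δ_μ)(λ) − u²/(2t), minus log μ, equals (1/2)(μ²/t − 1) − log(μ/√t) when μ ≤ √t and 0 when μ ≥ √t; that is, the total-critical-point complexity is Σ^tot = (1/2)(μ²/t − 1) − log(μ/√t) if μ ≤ √t and Σ^tot = 0 if μ ≥ √t. -/

import Mathlib

/-!
Write `u = μ + √t w` and `m = μ / √t`. By scaling, the function to be maximised is
`log √t + Φ w - (w + m) ^ 2 / 2`, where `Φ` (`semicirclePotential`) is the logarithmic potential of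
the semicircle law of variance one.

The potential is computed after the substitution `x = 2 cos θ`, which turns the semicircle law into
`(1 - cos 2θ) dθ / 2π` on `[0, 2π]`, so that only the zeroth and second Fourier coefficients of
`log |2 cos θ - w|` are needed.

* If `w = 2 cos φ`, then `|2 cos θ - w| = |2 sin ((θ + φ) / 2)| |2 sin ((θ - φ) / 2)|`, and
  translating `θ` reduces both coefficients to those of `log |2 sin (θ / 2)|`. This gives
  `Φ w = w ^ 2 / 4 - 1 / 2` for `|w| ≤ 2` (`semicirclePotential_inside`).
* If `w = a + 1 / a` with `0 < |a| < 1`, then `|2 cos θ - w| = |e ^ (iθ) - a| ^ 2 / |a|`. The mean of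
  `log |e ^ (iθ) - a|` vanishes, and integration by parts expresses the second coefficient through
  the Poisson integral of `z - z ^ 3` at `a`. This gives `Φ w = -log |a| + a ^ 2 / 2`
  (`semicirclePotential_outside`).

The maximum of `Φ w - (w + m) ^ 2 / 2` is then found by elementary inequalities. For `m ≤ 1` it is
`m ^ 2 / 2 - 1 / 2`, attained at `w = -2 m` (`isGreatest_low`); for `m ≥ 1` it is `log m`, attained
at `w = -(m + 1 / m)` (`isGreatest_high`).
-/

open MeasureTheory

/-! ### Fourier coefficients of `log |2 sin (θ / 2)|` -/

open Real in
/-- A primitive of `cos 2θ log (sin (θ / 2))` up to a trigonometric polynomial. It is the boundary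
term `sin 2θ log (sin (θ / 2)) / 2` of an integration by parts, written through `s log s` with
`s = sin (θ / 2)` so that it visibly extends continuously to the endpoints `0` and `2π`. -/
lemma hasDerivAt_cos_mul_sin_mul_log_sin {θ : ℝ} (h : 0 < sin (θ / 2)) :
    HasDerivAt (fun θ => 2 * cos (θ / 2) * cos θ * (sin (θ / 2) * log (sin (θ / 2))))
      (cos (2 * θ) * log (sin (θ / 2)) + (cos θ + 1 / 2 + cos (2 * θ) / 2) / 2) θ := by
  have h2 : HasDerivAt (fun θ : ℝ => θ / 2) (1 / 2) θ := (hasDerivAt_id θ).div_const 2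
  have hs := h2.sin
  have hc := h2.cos
  have hl := hs.log h.ne'
  refine (((hc.const_mul 2).mul (hasDerivAt_cos θ)).mul (hs.mul hl)).congr_deriv ?_
  have e1 : cos θ = 2 * cos (θ / 2) ^ 2 - 1 := by rw [← cos_two_mul]; ring_nf
  have e2 : sin θ = 2 * sin (θ / 2) * cos (θ / 2) := by rw [← sin_two_mul]; ring_nf
  have e3 := sin_sq (θ / 2)
  simp only [Pi.mul_apply]
  rw [cos_two_mul, e1, e2]
  generalize cos (θ / 2) = c at *
  generalize sin (θ / 2) = s at *
  field_simp
  have : s ^ 2 = 1 - c ^ 2 := e3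
  ring_nf
  simp only [this]
  ring

open Real in
lemma intervalIntegrable_log_abs_two_sin (a b : ℝ) :
    IntervalIntegrable (fun θ => log |2 * sin (θ / 2)|) volume a b := by
  have : AnalyticOnNhd ℝ (fun θ : ℝ => 2 * sin (θ / 2)) (Set.uIcc a b) := by
    intro x _; fun_prop
  simpa using this.meromorphicOn.intervalIntegrable_log_norm

open Real in
lemma intervalIntegrable_log_abs_two_cos_sub (w a b : ℝ) :
    IntervalIntegrable (fun θ => log |2 * cos θ - w|) volume a b := by
  have : AnalyticOnNhd ℝ (fun θ : ℝ => 2 * cos θ - w) (Set.uIcc a b) := by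
    intro x _; fun_prop
  simpa using this.meromorphicOn.intervalIntegrable_log_norm

open Real in
lemma integral_log_abs_two_sin : ∫ θ in (0:ℝ)..(2 * π), log |2 * sin (θ / 2)| = 0 := by
  have h := intervalIntegral.integral_comp_div (a := 0) (b := 2 * π)
    (fun x => log |2 * sin x|) (two_ne_zero (α := ℝ))
  rw [h]
  have h2 : ∫ x in (0:ℝ)..π, log |2 * sin x| = ∫ x in (0:ℝ)..π, (log 2 + log (sin x)) := by
    rw [intervalIntegral.integral_of_le pi_pos.le, intervalIntegral.integral_of_le pi_pos.le,
      integral_Ioc_eq_integral_Ioo, integral_Ioc_eq_integral_Ioo]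
    refine setIntegral_congr_fun measurableSet_Ioo fun x hx => ?_
    have := sin_pos_of_mem_Ioo hx
    rw [abs_of_pos (by positivity), log_mul two_ne_zero this.ne']
  have e : 2 * π / 2 = π := by ring
  rw [e, zero_div, h2, intervalIntegral.integral_add (by simp) (by apply intervalIntegrable_log_sin),
    integral_log_sin_zero_pi]
  simp; ring

open Real in
lemma integral_cos_two_mul_log_abs_two_sin :
    ∫ θ in (0:ℝ)..(2 * π), cos (2 * θ) * log |2 * sin (θ / 2)| = -(π / 2) := by
  have hpos : ∀ x ∈ Set.Ioo (0:ℝ) (2 * π), 0 < sin (x / 2) := fun x hx =>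
    sin_pos_of_pos_of_lt_pi (by linarith [hx.1]) (by linarith [hx.2])
  have hls : IntervalIntegrable (fun θ => log (sin (θ / 2))) volume 0 (2 * π) := by
    have : AnalyticOnNhd ℝ (fun θ : ℝ => sin (θ / 2)) (Set.uIcc 0 (2 * π)) := by
      intro x _; fun_prop
    exact this.meromorphicOn.intervalIntegrable_log
  have hi : IntervalIntegrable (fun θ => cos (2 * θ) * log (sin (θ / 2))) volume 0 (2 * π) :=
    hls.continuousOn_mul (by fun_prop)
  have hg : IntervalIntegrable (fun θ => (cos θ + 1 / 2 + cos (2 * θ) / 2) / 2) volume 0 (2 * π) :=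
    Continuous.intervalIntegrable (by fun_prop) _ _
  have hcont : Continuous
      (fun θ => 2 * cos (θ / 2) * cos θ * (sin (θ / 2) * log (sin (θ / 2)))) := by
    have : Continuous fun θ : ℝ => sin (θ / 2) * log (sin (θ / 2)) :=
      continuous_mul_log.comp (by fun_prop : Continuous fun θ : ℝ => sin (θ / 2))
    fun_prop
  have hF := intervalIntegral.integral_eq_sub_of_hasDerivAt_of_le (by positivity : 0 ≤ 2 * π)
    hcont.continuousOn (fun x hx => hasDerivAt_cos_mul_sin_mul_log_sin (hpos x hx)) (hi.add hg)
  rw [intervalIntegral.integral_add hi hg] at hF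
  have hc2 : ∫ θ in (0:ℝ)..(2 * π), cos (2 * θ) = 0 := by
    rw [intervalIntegral.integral_comp_mul_left (fun x => cos x) two_ne_zero, integral_cos]
    have : sin (2 * (2 * π)) = 0 := by
      have := sin_nat_mul_pi 4
      rw [← this]; congr 1; push_cast; ring
    simp [this]
  have hgv : ∫ θ in (0:ℝ)..(2 * π), (cos θ + 1 / 2 + cos (2 * θ) / 2) / 2 = π / 2 := by
    rw [intervalIntegral.integral_div, intervalIntegral.integral_add
      (Continuous.intervalIntegrable (by fun_prop) _ _)
      (Continuous.intervalIntegrable (by fun_prop) _ _), intervalIntegral.integral_add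
      (Continuous.intervalIntegrable (by fun_prop) _ _)
      (Continuous.intervalIntegrable (by fun_prop) _ _), intervalIntegral.integral_div, intervalIntegral.integral_div, hc2]
    simp
  have heq : ∫ θ in (0:ℝ)..(2 * π), cos (2 * θ) * log |2 * sin (θ / 2)| =
      ∫ θ in (0:ℝ)..(2 * π), (cos (2 * θ) * log 2 + cos (2 * θ) * log (sin (θ / 2))) := by
    rw [intervalIntegral.integral_of_le two_pi_pos.le, intervalIntegral.integral_of_le
      two_pi_pos.le, integral_Ioc_eq_integral_Ioo, integral_Ioc_eq_integral_Ioo]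
    refine setIntegral_congr_fun measurableSet_Ioo fun x hx => ?_
    have := hpos x hx
    rw [abs_of_pos (by positivity), log_mul two_ne_zero this.ne', mul_add]
  rw [heq, intervalIntegral.integral_add (Continuous.intervalIntegrable (by fun_prop) _ _) hi,
    intervalIntegral.integral_mul_const, hc2]
  rw [hgv] at hF
  have e : 2 * π / 2 = π := by ring
  simp [e] at hF
  linarith

/-! ### The potential inside the support -/

open Real in
/-- The product formula for `cos θ - cos φ`. Where a factor vanishes it fails for the logarithms,
because `log 0 = 0`. -/
lemma log_abs_two_cos_sub_two_cos (φ : ℝ) : ∀ᵐ θ : ℝ,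
    log |2 * cos θ - 2 * cos φ| =
      log |2 * sin ((θ + φ) / 2)| + log |2 * sin ((θ - φ) / 2)| := by
  have hz : ∀ c : ℝ, ∀ᵐ θ : ℝ, sin ((θ + c) / 2) ≠ 0 := by
    intro c
    have hcount : {θ : ℝ | sin ((θ + c) / 2) = 0}.Countable := by
      refine (Set.countable_range fun n : ℤ => 2 * (n * π) - c).mono ?_
      intro θ hθ
      obtain ⟨n, hn⟩ := sin_eq_zero_iff.mp hθ
      exact ⟨n, by simp only; linarith⟩
    filter_upwards [hcount.ae_notMem volume] with θ hθ using hθ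
  filter_upwards [hz φ, hz (-φ)] with θ h1 h2
  rw [← sub_eq_add_neg] at h2
  rw [← log_mul (by simpa using h1) (by simpa using h2), ← abs_mul, ← mul_sub, cos_sub_cos,
    ← abs_neg]
  congr 2; ring

open Real in
/-- Translation by `c` over a full period; `|sin (θ / 2)|` has period `2π`, although `sin (θ / 2)`
does not. -/
lemma integral_mul_log_abs_two_sin_shift (f : ℝ → ℝ) (hf : ∀ x, f (x + 2 * π) = f x) (c : ℝ) :
    ∫ θ in (0:ℝ)..(2 * π), f θ * log |2 * sin ((θ + c) / 2)| =
      ∫ θ in (0:ℝ)..(2 * π), f (θ - c) * log |2 * sin (θ / 2)| := by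
  have hp : Function.Periodic (fun θ => f (θ - c) * log |2 * sin (θ / 2)|) (2 * π) := by
    intro x
    have h1 : f (x + 2 * π - c) = f (x - c) := by rw [← hf (x - c)]; congr 1; ring
    have h2 : (x + 2 * π) / 2 = x / 2 + π := by ring
    simp only [h1, h2, sin_add_pi, mul_neg, abs_neg]
  have h := intervalIntegral.integral_comp_add_right (a := 0) (b := 2 * π)
    (fun θ => f (θ - c) * log |2 * sin (θ / 2)|) c
  simp only [add_sub_cancel_right] at h
  rw [h, zero_add, add_comm (2 * π) c, hp.intervalIntegral_add_eq c 0, zero_add]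

open Real in
/-- The logarithmic potential at `w` of the semicircle law of variance one, in the angular variable
`x = 2 cos θ`, with `θ` running over the full circle (so that each `x` is visited twice, and the
density is halved accordingly). -/
noncomputable def semicirclePotential (w : ℝ) : ℝ :=
  (∫ θ in (0:ℝ)..(2 * π), (1 - cos (2 * θ)) * log |2 * cos θ - w|) / (2 * π)

open Real in
lemma semicirclePotential_eq (w : ℝ) : semicirclePotential w =
    ((∫ θ in (0:ℝ)..(2 * π), log |2 * cos θ - w|) -
      ∫ θ in (0:ℝ)..(2 * π), cos (2 * θ) * log |2 * cos θ - w|) / (2 * π) := by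
  have h := intervalIntegrable_log_abs_two_cos_sub w 0 (2 * π)
  rw [semicirclePotential, ← intervalIntegral.integral_sub h (h.continuousOn_mul (by fun_prop))]
  simp only [sub_mul, one_mul]

open Real in
lemma semicirclePotential_two_cos (φ : ℝ) :
    semicirclePotential (2 * cos φ) = cos (2 * φ) / 2 := by
  have hi : ∀ c : ℝ, IntervalIntegrable (fun θ => log |2 * sin ((θ + c) / 2)|)
      volume 0 (2 * π) := by
    intro c
    have : AnalyticOnNhd ℝ (fun θ : ℝ => 2 * sin ((θ + c) / 2)) (Set.uIcc 0 (2 * π)) := by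
      intro x _; fun_prop
    simpa using this.meromorphicOn.intervalIntegrable_log_norm
  -- Summing the two translates by `φ` and `-φ` leaves no sine coefficient when `f θ = cos 2θ`.
  have key : ∀ f : ℝ → ℝ, Continuous f → (∀ x, f (x + 2 * π) = f x) →
      ∫ θ in (0:ℝ)..(2 * π), f θ * log |2 * cos θ - 2 * cos φ| =
      ∫ θ in (0:ℝ)..(2 * π), (f (θ - φ) + f (θ + φ)) * log |2 * sin (θ / 2)| := by
    intro f hc hp
    have h0 : ∫ θ in (0:ℝ)..(2 * π), f θ * log |2 * cos θ - 2 * cos φ| =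
        ∫ θ in (0:ℝ)..(2 * π), (f θ * log |2 * sin ((θ + φ) / 2)| +
          f θ * log |2 * sin ((θ + -φ) / 2)|) := by
      refine intervalIntegral.integral_congr_ae ?_
      filter_upwards [log_abs_two_cos_sub_two_cos φ] with θ hθ _
      rw [hθ, mul_add, sub_eq_add_neg]
    rw [h0, intervalIntegral.integral_add ((hi φ).continuousOn_mul hc.continuousOn)
      ((hi (-φ)).continuousOn_mul hc.continuousOn), integral_mul_log_abs_two_sin_shift f hp,
      integral_mul_log_abs_two_sin_shift f hp, ← intervalIntegral.integral_add]
    · simp only [sub_neg_eq_add, add_mul]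
    · exact (intervalIntegrable_log_abs_two_sin _ _).continuousOn_mul (by fun_prop)
    · exact (intervalIntegrable_log_abs_two_sin _ _).continuousOn_mul (by fun_prop)
  have k1 := key (fun _ => 1) continuous_const (fun _ => rfl)
  have k2 := key (fun θ => cos (2 * θ)) (by fun_prop) (fun x => by
    rw [mul_add, show 2 * (2 * π) = ((2 : ℕ) : ℝ) * (2 * π) by norm_num, cos_add_nat_mul_two_pi])
  have e : ∀ θ, (cos (2 * (θ - φ)) + cos (2 * (θ + φ))) * log |2 * sin (θ / 2)| =
      2 * cos (2 * φ) * (cos (2 * θ) * log |2 * sin (θ / 2)|) := by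
    intro θ
    rw [mul_sub, mul_add, cos_sub, cos_add]; ring
  simp only [e, intervalIntegral.integral_const_mul, integral_cos_two_mul_log_abs_two_sin] at k2
  simp only [one_mul, intervalIntegral.integral_const_mul, integral_log_abs_two_sin] at k1
  rw [semicirclePotential_eq, k1, k2]
  field_simp
  ring

lemma semicirclePotential_inside {w : ℝ} (hw : |w| ≤ 2) :
    semicirclePotential w = w ^ 2 / 4 - 1 / 2 := by
  obtain ⟨h1, h2⟩ := abs_le.mp hw
  have h := semicirclePotential_two_cos (Real.arccos (w / 2))
  rw [Real.cos_two_mul, Real.cos_arccos (by linarith) (by linarith)] at h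
  rw [show 2 * (w / 2) = w by ring] at h
  rw [h]; ring

/-! ### The potential outside the support -/

open Real in
lemma norm_circleMap_sub_sq (a θ : ℝ) :
    ‖circleMap 0 1 θ - a‖ ^ 2 = 1 + a ^ 2 - 2 * a * cos θ := by
  have h := sin_sq_add_cos_sq θ
  rw [← Complex.normSq_eq_norm_sq, Complex.normSq_apply]
  simp [circleMap, Complex.exp_ofReal_mul_I_re, Complex.exp_ofReal_mul_I_im]
  nlinarith

open Real in
lemma integral_log_poisson_denom {a : ℝ} (ha : |a| < 1) :
    ∫ θ in (0:ℝ)..(2 * π), log (1 + a ^ 2 - 2 * a * cos θ) = 0 := by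
  have h := circleAverage_log_norm_sub_const₀ (a := (a : ℂ)) (by simpa using ha)
  rw [circleAverage, smul_eq_zero] at h
  have h' := h.resolve_left (by positivity)
  simp_rw [← norm_circleMap_sub_sq, log_pow]
  rw [intervalIntegral.integral_const_mul, h', mul_zero]

open Real in
lemma poisson_denom_pos {a : ℝ} (ha : |a| < 1) (θ : ℝ) : 0 < 1 + a ^ 2 - 2 * a * cos θ := by
  have h1 : a * cos θ ≤ |a| := by
    refine (le_abs_self _).trans ?_
    rw [abs_mul]
    exact mul_le_of_le_one_right (abs_nonneg a) (abs_cos_le_one θ)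
  nlinarith [sq_abs a, mul_pos (sub_pos.2 ha) (sub_pos.2 ha)]

open Real in
/-- Integration by parts turns the integral into that of `sin 2θ sin θ` against the Poisson kernel
at `a`, and `2 sin 2θ sin θ = cos θ - cos 3θ` is the boundary value of `Re (z - z ^ 3)`. -/
lemma integral_cos_two_mul_log_poisson_denom {a : ℝ} (ha : |a| < 1) :
    ∫ θ in (0:ℝ)..(2 * π), cos (2 * θ) * log (1 + a ^ 2 - 2 * a * cos θ) = -(π * a ^ 2) := by
  have hD := poisson_denom_pos ha
  have hP := DiffContOnCl.circleAverage_poissonKernel_smul' (c := 0) (R := 1) (w := (a : ℂ))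
    (f := fun z : ℂ => z - z ^ 3) (by
      apply Differentiable.diffContOnCl; fun_prop) (by simpa using ha)
  rw [circleAverage] at hP
  have hcont : Continuous fun θ : ℝ => (1 - a ^ 2) / (1 + a ^ 2 - 2 * a * cos θ) :=
    continuous_const.div (by fun_prop) fun θ => (hD θ).ne'
  have hre : ∀ θ : ℝ, (((‖circleMap 0 1 θ - 0‖ ^ 2 - ‖(a : ℂ) - 0‖ ^ 2) /
      ‖circleMap 0 1 θ - 0 - ((a : ℂ) - 0)‖ ^ 2) • (circleMap 0 1 θ - circleMap 0 1 θ ^ 3)) =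
      (((1 - a ^ 2) / (1 + a ^ 2 - 2 * a * cos θ) : ℝ) : ℂ) *
        (circleMap 0 1 θ - circleMap 0 1 θ ^ 3) := by
    intro θ
    simp only [sub_zero, norm_circleMap_sub_sq, Complex.real_smul]
    simp
  simp only [hre] at hP
  have hP2 := congrArg Complex.re hP
  rw [Complex.smul_re, ← Complex.reCLM_apply, ← ContinuousLinearMap.intervalIntegral_comp_comm] at hP2
  swap
  · apply Continuous.intervalIntegrable
    have := continuous_circleMap 0 1
    exact (Complex.continuous_ofReal.comp hcont).mul (by fun_prop)
  have hre2 : ∀ θ : ℝ, Complex.reCLM ((((1 - a ^ 2) / (1 + a ^ 2 - 2 * a * cos θ) : ℝ) : ℂ) *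
        (circleMap 0 1 θ - circleMap 0 1 θ ^ 3)) =
      (2 * (1 - a ^ 2)) * (sin (2 * θ) * sin θ / (1 + a ^ 2 - 2 * a * cos θ)) := by
    intro θ
    rw [Complex.reCLM_apply, Complex.re_ofReal_mul]
    have : (circleMap 0 1 θ - circleMap 0 1 θ ^ 3).re = cos θ - cos (3 * θ) := by
      rw [Complex.sub_re]
      congr 1
      · simp [circleMap, Complex.exp_ofReal_mul_I_re]
      · rw [circleMap_zero, Complex.ofReal_one, one_mul, ← Complex.exp_nat_mul]
        rw [← Complex.exp_ofReal_mul_I_re]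
        congr 2; push_cast; ring
    rw [this, cos_three_mul, sin_two_mul]
    have h := sin_sq θ
    have : 2 * sin θ * cos θ * sin θ = 2 * (1 - cos θ ^ 2) * cos θ := by rw [← h]; ring
    rw [this]; ring
  simp only [hre2, intervalIntegral.integral_const_mul] at hP2
  have hne : 1 - a ^ 2 ≠ 0 := by
    have : a ^ 2 < 1 := (sq_lt_one_iff_abs_lt_one a).2 ha
    linarith
  have hval : ∫ θ in (0:ℝ)..(2 * π), sin (2 * θ) * sin θ / (1 + a ^ 2 - 2 * a * cos θ) =
      π * a := by
    have h3 : ((a : ℂ) - (a : ℂ) ^ 3).re = a * (1 - a ^ 2) := by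
      rw [← Complex.ofReal_pow, ← Complex.ofReal_sub, Complex.ofReal_re]; ring
    rw [h3, smul_eq_mul] at hP2
    have hpi := pi_pos.ne'
    field_simp at hP2
    linarith
  have hd : ∀ θ : ℝ, HasDerivAt (fun θ => log (1 + a ^ 2 - 2 * a * cos θ))
      (2 * a * sin θ / (1 + a ^ 2 - 2 * a * cos θ)) θ := by
    intro θ
    have := (((hasDerivAt_cos θ).const_mul (2 * a)).const_sub (1 + a ^ 2)).log (hD θ).ne'
    convert this using 1
    ring
  have hs : ∀ θ : ℝ, HasDerivAt (fun θ => sin (2 * θ) / 2) (cos (2 * θ)) θ := by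
    intro θ
    have := (((hasDerivAt_id θ).const_mul 2).sin).div_const 2
    exact this.congr_deriv (by simp)
  have hbp := intervalIntegral.integral_mul_deriv_eq_deriv_mul (a := 0) (b := 2 * π)
    (fun θ _ => hd θ) (fun θ _ => hs θ)
    (Continuous.intervalIntegrable (Continuous.div (by fun_prop) (by fun_prop)
      fun θ => (hD θ).ne') _ _)
    (Continuous.intervalIntegrable (by fun_prop) _ _)
  have h4 : sin (2 * (2 * π)) = 0 := by
    have := sin_nat_mul_pi 4
    rw [← this]; congr 1; push_cast; ring
  have e1 : ∀ θ, 2 * a * sin θ / (1 + a ^ 2 - 2 * a * cos θ) * (sin (2 * θ) / 2) =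
      a * (sin (2 * θ) * sin θ / (1 + a ^ 2 - 2 * a * cos θ)) := by intro θ; ring
  simp only [e1, intervalIntegral.integral_const_mul, hval, h4] at hbp
  simp only [mul_comm (cos (2 * _))]
  rw [hbp]
  simp
  ring

open Real in
lemma semicirclePotential_outside {a : ℝ} (h0 : a ≠ 0) (ha : |a| < 1) :
    semicirclePotential (a + a⁻¹) = -log |a| + a ^ 2 / 2 := by
  have hD := poisson_denom_pos ha
  have e : ∀ θ, log |2 * cos θ - (a + a⁻¹)| = log (1 + a ^ 2 - 2 * a * cos θ) - log |a| := by
    intro θ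
    rw [← log_div (hD θ).ne' (abs_ne_zero.2 h0)]
    rw [← abs_of_pos (hD θ), ← abs_div, ← abs_neg]
    congr 2
    field_simp
    ring
  have hc : Continuous fun θ => log (1 + a ^ 2 - 2 * a * cos θ) :=
    Continuous.log (by fun_prop) fun θ => (hD θ).ne'
  have hc2 : ∫ θ in (0:ℝ)..(2 * π), cos (2 * θ) = 0 := by
    rw [intervalIntegral.integral_comp_mul_left (fun x => cos x) two_ne_zero, integral_cos]
    have : sin (2 * (2 * π)) = 0 := by
      have := sin_nat_mul_pi 4
      rw [← this]; congr 1; push_cast; ring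
    simp [this]
  rw [semicirclePotential_eq]
  simp only [e, mul_sub]
  rw [intervalIntegral.integral_sub (hc.intervalIntegrable _ _) (by simp),
    intervalIntegral.integral_sub (Continuous.intervalIntegrable (by fun_prop) _ _)
      (Continuous.intervalIntegrable (by fun_prop) _ _), integral_log_poisson_denom ha,
    integral_cos_two_mul_log_poisson_denom ha, intervalIntegral.integral_mul_const, hc2]
  simp
  field_simp

/-! ### Reduction of the integral to the angular variable -/

open Real in
lemma integral_zero_pi_eq_semicirclePotential (w : ℝ) :
    ∫ θ in (0:ℝ)..π, 2 / π * sin θ ^ 2 * log |2 * cos θ - w| = semicirclePotential w := by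
  have hi : ∀ a b, IntervalIntegrable (fun θ => (1 - cos (2 * θ)) * log |2 * cos θ - w|)
      volume a b := fun a b =>
    (intervalIntegrable_log_abs_two_cos_sub w a b).continuousOn_mul (by fun_prop)
  have h := intervalIntegral.integral_comp_sub_left (a := 0) (b := π)
    (fun θ => (1 - cos (2 * θ)) * log |2 * cos θ - w|) (2 * π)
  have e1 : ∀ x, cos (2 * (2 * π - x)) = cos (2 * x) := by
    intro x
    rw [cos_two_mul, cos_two_mul, cos_two_pi_sub]
  simp only [cos_two_pi_sub, e1] at h
  rw [show 2 * π - π = π by ring, sub_zero] at h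
  rw [semicirclePotential, ← intervalIntegral.integral_add_adjacent_intervals (hi 0 π) (hi π _),
    ← h]
  have e2 : ∀ θ, 2 / π * sin θ ^ 2 * log |2 * cos θ - w| =
      (1 / π) * ((1 - cos (2 * θ)) * log |2 * cos θ - w|) := by
    intro θ
    rw [cos_two_mul, sin_sq]; ring
  simp only [e2, intervalIntegral.integral_const_mul]
  field_simp
  ring

open Real in
/-- The substitution `x = μ + 2 √t cos θ`. No integrability of `g` is needed: the change of
variables formula holds for Bochner integrals in general. -/
lemma integral_semicircle (t μ : ℝ) (ht : 0 < t) (ν : Measure ℝ)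
    (hν : ν = volume.withDensity fun x =>
      ENNReal.ofReal (Real.sqrt (4 * t - (x - μ) ^ 2) / (2 * Real.pi * t))) (g : ℝ → ℝ) :
    ∫ x, g x ∂ν = ∫ θ in (0:ℝ)..π, 2 / π * sin θ ^ 2 * g (μ + √t * (2 * cos θ)) := by
  have hst : 0 < √t := sqrt_pos.2 ht
  have hsq : √t ^ 2 = t := sq_sqrt ht.le
  rw [hν, integral_withDensity_eq_integral_toReal_smul (by fun_prop)
    (Filter.Eventually.of_forall fun _ => ENNReal.ofReal_lt_top)]
  have hnn : ∀ x, (ENNReal.ofReal (√(4 * t - (x - μ) ^ 2) / (2 * π * t))).toReal =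
    √(4 * t - (x - μ) ^ 2) / (2 * π * t) := fun x => ENNReal.toReal_ofReal (by positivity)
  simp only [hnn]
  set F : ℝ → ℝ := fun θ => μ + √t * (2 * cos θ) with hF
  have hinj : Set.InjOn F (Set.Icc 0 π) := by
    intro x hx y hy hxy
    apply injOn_cos hx hy
    have : √t * (2 * cos x) = √t * (2 * cos y) := by simpa [hF] using hxy
    have := mul_left_cancel₀ hst.ne' this
    linarith
  have hder : ∀ θ ∈ Set.Icc (0:ℝ) π, HasDerivWithinAt F (√t * (2 * -sin θ)) (Set.Icc 0 π) θ :=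
    fun θ _ => ((((hasDerivAt_cos θ).const_mul 2).const_mul (√t)).const_add μ).hasDerivWithinAt
  rw [← setIntegral_eq_integral_of_forall_compl_eq_zero (s := F '' Set.Icc 0 π),
    integral_image_eq_integral_abs_deriv_smul measurableSet_Icc hder hinj,
    intervalIntegral.integral_of_le pi_pos.le, ← integral_Icc_eq_integral_Ioc]
  · refine setIntegral_congr_fun measurableSet_Icc fun θ hθ => ?_
    have hs : 0 ≤ sin θ := sin_nonneg_of_mem_Icc hθ
    have h1 : 4 * t - (F θ - μ) ^ 2 = (2 * √t * sin θ) ^ 2 := by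
      simp only [hF, mul_pow, sin_sq]
      nth_rw 1 [← hsq]
      ring
    have h2 : |√t * (2 * -sin θ)| = 2 * √t * sin θ := by
      rw [← abs_of_nonneg (by positivity : 0 ≤ 2 * √t * sin θ), ← abs_neg]
      congr 1; ring
    simp only [smul_eq_mul, h1, h2, sqrt_sq (by positivity : 0 ≤ 2 * √t * sin θ)]
    have h3 : 2 * √t * sin θ * (2 * √t * sin θ / (2 * π * t)) = 2 / π * sin θ ^ 2 := by
      field_simp
      rw [hsq]; ring
    rw [← mul_assoc, h3]
  · intro x hx
    have : 4 * t - (x - μ) ^ 2 ≤ 0 := by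
      by_contra! hc
      apply hx
      have hlt : (x - μ) ^ 2 < (2 * √t) ^ 2 := by rw [mul_pow, hsq]; linarith
      have habs := abs_lt.mp (abs_lt_of_sq_lt_sq hlt (by positivity))
      refine ⟨arccos ((x - μ) / (2 * √t)), ⟨arccos_nonneg _, arccos_le_pi _⟩, ?_⟩
      simp only [hF]
      rw [cos_arccos]
      · field_simp; ring
      · rw [le_div_iff₀ (by positivity)]; linarith
      · rw [div_le_iff₀ (by positivity)]; linarith
    rw [sqrt_eq_zero_of_nonpos this]
    simp

open Real in
lemma integral_log_abs_sub_semicircle (t μ : ℝ) (ht : 0 < t) (ν : Measure ℝ)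
    (hν : ν = volume.withDensity fun x =>
      ENNReal.ofReal (Real.sqrt (4 * t - (x - μ) ^ 2) / (2 * Real.pi * t))) (w : ℝ) :
    ∫ x, log |x - (μ + √t * w)| ∂ν = log √t + semicirclePotential w := by
  have hst : 0 < √t := sqrt_pos.2 ht
  rw [integral_semicircle t μ ht ν hν, ← integral_zero_pi_eq_semicirclePotential]
  -- `log (√t * y) = log √t + log y` needs `y ≠ 0`, which holds for almost every `θ`.
  have hae : ∀ᵐ θ : ℝ, 2 * cos θ - w ≠ 0 := by
    have hcount : {θ : ℝ | 2 * cos θ - w = 0}.Countable := by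
      by_cases hw : ∃ φ, 2 * cos φ - w = 0
      · obtain ⟨φ, hφ⟩ := hw
        refine ((Set.countable_range fun n : ℤ => 2 * n * π + φ).union
          (Set.countable_range fun n : ℤ => 2 * n * π - φ)).mono ?_
        intro θ hθ
        have hθ' : 2 * cos θ - w = 0 := hθ
        obtain ⟨n, hn⟩ := cos_eq_cos_iff.mp (show cos φ = cos θ by linarith)
        rcases hn with hn | hn
        · exact Or.inl ⟨n, hn.symm⟩
        · exact Or.inr ⟨n, hn.symm⟩
      · push Not at hw
        simp [hw]
    filter_upwards [hcount.ae_notMem volume] with θ hθ using hθ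
  have h0 : ∫ θ in (0:ℝ)..π, 2 / π * sin θ ^ 2 * log |μ + √t * (2 * cos θ) - (μ + √t * w)| =
      ∫ θ in (0:ℝ)..π, (2 / π * sin θ ^ 2 * log √t + 2 / π * sin θ ^ 2 * log |2 * cos θ - w|) := by
    refine intervalIntegral.integral_congr_ae ?_
    filter_upwards [hae] with θ hθ _
    rw [← mul_add, ← log_mul hst.ne' (abs_ne_zero.2 hθ)]
    have e : μ + √t * (2 * cos θ) - (μ + √t * w) = √t * (2 * cos θ - w) := by ring
    rw [e, abs_mul, abs_of_pos hst]
  rw [h0, intervalIntegral.integral_add (Continuous.intervalIntegrable (by fun_prop) _ _)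
    ((intervalIntegrable_log_abs_two_cos_sub w 0 π).continuousOn_mul (by fun_prop)),
    intervalIntegral.integral_mul_const, intervalIntegral.integral_const_mul, integral_sin_sq]
  simp

/-! ### Maximisation -/

lemma exists_eq_add_inv {w : ℝ} (hw : 2 < |w|) : ∃ a : ℝ, a ≠ 0 ∧ |a| < 1 ∧ w = a + a⁻¹ := by
  wlog hpos : 0 < w generalizing w
  · obtain ⟨a, h0, h1, h2⟩ := this (w := -w) (by simpa using hw) (by
      rcases abs_cases w with h | h <;> linarith)
    exact ⟨-a, by simpa using h0, by simpa using h1, by rw [inv_neg]; linarith⟩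
  rw [abs_of_pos hpos] at hw
  set s := √(w ^ 2 - 4) with hs
  have hs2 : s ^ 2 = w ^ 2 - 4 := Real.sq_sqrt (by nlinarith)
  have hs0 : 0 ≤ s := Real.sqrt_nonneg _
  have hsw : s < w := by nlinarith
  have hws : w - 2 < s := by nlinarith
  refine ⟨(w - s) / 2, by linarith, ?_, ?_⟩
  · rw [abs_lt]; constructor <;> linarith
  · have : w - s ≠ 0 := by linarith
    field_simp
    nlinarith

lemma log_le_half_sub_inv {r : ℝ} (hr : 1 ≤ r) : Real.log r ≤ (r - r⁻¹) / 2 := by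
  rw [← Real.sinh_log (by linarith)]
  exact Real.self_le_sinh_iff.2 (Real.log_nonneg hr)

/-- In terms of `r = 1 / |a| ≥ 1`, the largest value outside the support is that on the branch
`w = -(r + 1 / r)`. For `m ≤ 1` the bound is monotone in `m`; at `m = 1` it follows from
`log r ≤ (r - 1 / r) / 2` and `(r - 1) ^ 3 ≥ 0`. -/
lemma outside_bound_low {r m : ℝ} (hr : 1 ≤ r) (hm : m ≤ 1) :
    Real.log r + r⁻¹ ^ 2 / 2 - (r + r⁻¹ - m) ^ 2 / 2 ≤ m ^ 2 / 2 - 1 / 2 := by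
  have hl := log_le_half_sub_inv hr
  have hr0 : 0 < r := by linarith
  have hrr : r * r⁻¹ = 1 := mul_inv_cancel₀ hr0.ne'
  have hq : 0 < r⁻¹ := by positivity
  generalize r⁻¹ = q at *
  -- the cubic `(r - 1) ^ 3`, divided by `r`
  have hc : 0 ≤ r ^ 2 - 3 * r + 3 - q := by
    have : r ^ 2 - 3 * r + 3 - q = q * (r - 1) ^ 3 := by
      linear_combination (-r ^ 2 + 3 * r - 3) * hrr
    rw [this]
    have : 0 ≤ r - 1 := by linarith
    positivity
  have h2 : 2 ≤ r + q := by nlinarith [sq_nonneg (r - q), sq_nonneg (r - 1)]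
  nlinarith [mul_nonneg (sub_nonneg.2 hm) (by linarith : 0 ≤ r + q - m - 1)]

/-- For `m ≥ 1` the difference of the two sides depends on `log (r / m)`, and the bound is an
equality at `r = m`; the two sides of this point use different estimates of the logarithm. -/
lemma outside_bound_high {r m : ℝ} (hr : 1 ≤ r) (hm : 1 ≤ m) :
    Real.log r + r⁻¹ ^ 2 / 2 - (r + r⁻¹ - m) ^ 2 / 2 ≤ Real.log m := by
  have hr0 : 0 < r := by linarith
  have hm0 : 0 < m := by linarith
  suffices h : Real.log r - Real.log m ≤ 1 - m / r + (r - m) ^ 2 / 2 by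
    have e : (r + r⁻¹ - m) ^ 2 / 2 = (r - m) ^ 2 / 2 + (1 - m / r) + r⁻¹ ^ 2 / 2 := by
      field_simp; ring
    rw [e]; linarith
  rcases le_total m r with h | h
  · have h1 : 1 ≤ r / m := by rwa [one_le_div hm0]
    have hl := log_le_half_sub_inv h1
    rw [Real.log_div hr0.ne' hm0.ne', inv_div] at hl
    have e : 1 - m / r + (r - m) ^ 2 / 2 - (r / m - m / r) / 2 =
        (r - m) ^ 2 / 2 * (1 - 1 / (m * r)) := by
      field_simp; ring
    have : 0 ≤ (r - m) ^ 2 / 2 * (1 - 1 / (m * r)) := by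
      have : 1 / (m * r) ≤ 1 := by
        rw [div_le_one (by positivity)]; nlinarith
      have : 0 ≤ 1 - 1 / (m * r) := by linarith
      positivity
    linarith
  · have hx : 0 ≤ m / r - 1 := by
      have : 1 ≤ m / r := by rwa [one_le_div hr0]
      linarith
    have hl := Real.le_log_one_add_of_nonneg hx
    rw [add_sub_cancel, Real.log_div hm0.ne' hr0.ne'] at hl
    set x := m / r - 1 with hxd
    have hmr : m = r * (1 + x) := by rw [hxd]; field_simp; ring
    have h2 : x - x ^ 2 / 2 ≤ 2 * x / (x + 2) := by
      rw [le_div_iff₀ (by linarith)]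
      nlinarith [pow_nonneg hx 3]
    have h3 : x ^ 2 ≤ (r - m) ^ 2 := by
      have : (r - m) ^ 2 = r ^ 2 * x ^ 2 := by rw [hmr]; ring
      rw [this]
      nlinarith [mul_nonneg (sub_nonneg.2 (one_le_pow₀ hr : 1 ≤ r ^ 2)) (sq_nonneg x)]
    have h4 : 1 - m / r = -x := by rw [hxd]; ring
    rw [h4]; linarith

/-- Every `w` with `|w| > 2` satisfies `|w| = r + 1 / r` for some `r > 1`, and as `m > 0` the
negative value of `w` is the more favourable one. -/
lemma exists_bound_outside {w m : ℝ} (hw : 2 < |w|) (hm : 0 < m) : ∃ r : ℝ, 1 ≤ r ∧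
    semicirclePotential w - (w + m) ^ 2 / 2 ≤
      Real.log r + r⁻¹ ^ 2 / 2 - (r + r⁻¹ - m) ^ 2 / 2 := by
  obtain ⟨a, h0, h1, rfl⟩ := exists_eq_add_inv hw
  have hpos : 0 < |a| := abs_pos.2 h0
  refine ⟨|a|⁻¹, (one_le_inv₀ hpos).2 h1.le, ?_⟩
  rw [semicirclePotential_outside h0 h1, Real.log_inv, inv_inv, sq_abs]
  have h2 : |a|⁻¹ + |a| = |a + a⁻¹| := by
    rcases lt_or_gt_of_ne h0 with h | h
    · have : a + a⁻¹ < 0 := add_neg h (inv_lt_zero.2 h)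
      rw [abs_of_neg h, abs_of_neg this, inv_neg]; ring
    · have : 0 < a + a⁻¹ := by positivity
      rw [abs_of_pos h, abs_of_pos this]; ring
  rw [h2]
  have h3 := neg_abs_le (a + a⁻¹)
  nlinarith [sq_abs (a + a⁻¹)]

lemma isGreatest_low {m : ℝ} (hm : 0 < m) (hm1 : m ≤ 1) :
    IsGreatest (Set.range fun w => semicirclePotential w - (w + m) ^ 2 / 2)
      (m ^ 2 / 2 - 1 / 2) := by
  constructor
  · refine ⟨-(2 * m), ?_⟩
    simp only
    rw [semicirclePotential_inside (by rw [abs_neg, abs_of_pos] <;> linarith)]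
    ring
  · rintro _ ⟨w, rfl⟩
    rcases le_or_gt |w| 2 with hw | hw
    · simp only
      rw [semicirclePotential_inside hw]
      nlinarith [sq_nonneg (w + 2 * m)]
    · obtain ⟨r, hr, h⟩ := exists_bound_outside hw hm
      exact h.trans (outside_bound_low hr hm1)

lemma isGreatest_high {m : ℝ} (hm1 : 1 ≤ m) :
    IsGreatest (Set.range fun w => semicirclePotential w - (w + m) ^ 2 / 2) (Real.log m) := by
  have hm : 0 < m := by linarith
  constructor
  · refine ⟨-(m + m⁻¹), ?_⟩
    simp only
    rcases hm1.eq_or_lt with rfl | hlt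
    · rw [semicirclePotential_inside (by norm_num)]; norm_num
    · have h := semicirclePotential_outside (a := -m⁻¹) (by simpa using hm.ne')
        (by rw [abs_neg, abs_of_pos (by positivity)]; exact inv_lt_one_of_one_lt₀ hlt)
      rw [abs_neg, abs_of_pos (by positivity), inv_neg, inv_inv, Real.log_inv] at h
      rw [show -(m + m⁻¹) = -m⁻¹ + -m by ring, h]
      ring
  · rintro _ ⟨w, rfl⟩
    rcases le_or_gt |w| 2 with hw | hw
    · simp only
      rw [semicirclePotential_inside hw]
      have h := outside_bound_high le_rfl hm1
      rw [Real.log_one] at h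
      have := (abs_le.mp hw).1
      -- the quadratic is largest at the edge `w = -2`
      nlinarith [mul_nonneg (by linarith : 0 ≤ w + 2) (by linarith : 0 ≤ w - 2 + 4 * m)]
    · obtain ⟨r, hr, h⟩ := exists_bound_outside hw hm
      exact h.trans (outside_bound_high hr hm1)

theorem stmt19 (t μ : ℝ) (ht : 0 < t) (hμ : 0 < μ)
    (ν : Measure ℝ)
    (hν : ν = volume.withDensity fun x =>
      ENNReal.ofReal (Real.sqrt (4 * t - (x - μ) ^ 2) / (2 * Real.pi * t))) :
    (μ ≤ Real.sqrt t →
      -Real.log μ + sSup (Set.range fun u : ℝ =>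
          (∫ x, Real.log |x - u| ∂ν) - u ^ 2 / (2 * t)) =
        (1 / 2) * (μ ^ 2 / t - 1) - Real.log (μ / Real.sqrt t)) ∧
    (Real.sqrt t ≤ μ →
      -Real.log μ + sSup (Set.range fun u : ℝ =>
          (∫ x, Real.log |x - u| ∂ν) - u ^ 2 / (2 * t)) = 0) := by
  have hst : 0 < √t := Real.sqrt_pos.2 ht
  have hsq : √t ^ 2 = t := Real.sq_sqrt ht.le
  -- the substitution `u = μ + √t w`
  have hval : ∀ w, (∫ x, Real.log |x - (μ + √t * w)| ∂ν) - (μ + √t * w) ^ 2 / (2 * t) =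
      Real.log √t + (semicirclePotential w - (w + μ / √t) ^ 2 / 2) := by
    intro w
    rw [integral_log_abs_sub_semicircle t μ ht ν hν]
    have : (μ + √t * w) ^ 2 / (2 * t) = (w + μ / √t) ^ 2 / 2 := by
      nth_rw 2 [← hsq]
      field_simp
      ring
    rw [this]; ring
  have hsup : ∀ M, IsGreatest
      (Set.range fun w => semicirclePotential w - (w + μ / √t) ^ 2 / 2) M →
      sSup (Set.range fun u : ℝ => (∫ x, Real.log |x - u| ∂ν) - u ^ 2 / (2 * t)) =
        Real.log √t + M := by
    intro M hM
    apply IsGreatest.csSup_eq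
    constructor
    · obtain ⟨w, hw⟩ := hM.1
      refine ⟨μ + √t * w, ?_⟩
      simp only at hw ⊢
      rw [hval, hw]
    · rintro _ ⟨u, rfl⟩
      have hu : u = μ + √t * ((u - μ) / √t) := by field_simp; ring
      simp only
      rw [hu, hval]
      have := hM.2 ⟨(u - μ) / √t, rfl⟩
      simp only at this
      linarith
  have hlog : Real.log (μ / √t) = Real.log μ - Real.log √t := Real.log_div hμ.ne' hst.ne'
  constructor
  · intro h
    rw [hsup _ (isGreatest_low (div_pos hμ hst) ((div_le_one hst).2 h)), hlog, div_pow, hsq]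
    ring
  · intro h
    rw [hsup _ (isGreatest_high ((one_le_div hst).2 h)), hlog]
    ring
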